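/- For all integers k >= 0 and m, j >= 0, setting n = 2m + kj, the cardinality of P_{n,k}^{m,j} equals (1/(m+1)) * C(m+j, m) * C(2m+j, m). -/

import Mathlib

open Finset

inductive Step : Type
  | u | d | h
deriving DecidableEq

/-- Lengths of maximal blocks of letters with `wt s ≠ none`, weighted by `wt`. -/
def runs (wt : Step → Option ℕ) : List Step → List ℕ
  | [] => []
  | s :: l =>
    match wt s, runs wt l with
    | none, r => r
    | some n, r =>
      match l with
      | [] => [n]
      | s' :: _ =>
        match wt s' with
        | none => n :: r
        | some _ =>
          match r with
          | a :: rest => (n + a) :: rest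
          | [] => [n]

def uRuns : List Step → List ℕ :=
  runs (fun s => match s with | Step.u => some 1 | _ => none)

def uhRuns (k : ℕ) : List Step → List ℕ :=
  runs (fun s => match s with | Step.u => some 1 | Step.h => some k | Step.d => none)

def alpha (i : ℕ) (w : List Step) : ℕ := (uRuns w).count i

def beta (i : ℕ) (w : List Step) : ℕ := (uRuns w).tail.count i

def IsNonneg (w : List Step) : Prop :=
  ∀ i : ℕ, (w.take i).count Step.d ≤ (w.take i).count Step.u

def pathSet (m j : ℕ) : Set (List Step) :=
  {w | w.count Step.u = m ∧ w.count Step.d = m ∧ w.count Step.h = j ∧ IsNonneg w}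

/-- no horizontal step lies on the x-axis -/
def NoLowH (w : List Step) : Prop :=
  ∀ (i : ℕ) (hi : i < w.length), w[i]'hi = Step.h →
    (w.take i).count Step.u ≠ (w.take i).count Step.d

def qSet (m j : ℕ) : Set (List Step) :=
  {w | w ∈ pathSet m j ∧ NoLowH w}

/-- normalized partial Bell polynomial (r!/m!) B_{m,r}(1!t₁,2!t₂,…) -/
def bellNorm (m r : ℕ) (t : ℕ → ℚ) : ℚ :=
  ∑ f : Fin m → Fin (m + 1),
    if (∑ i : Fin m, (f i : ℕ)) = r ∧ (∑ i : Fin m, ((i : ℕ) + 1) * (f i : ℕ)) = m then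
      (r.factorial : ℚ) / (∏ i : Fin m, ((f i : ℕ).factorial : ℚ)) * ∏ i : Fin m, t ((i : ℕ) + 1) ^ (f i : ℕ)
    else 0

/-- normalized potential polynomial  P_p^{(lam)}(1!t₁,2!t₂,…)/p! -/
def potential (lam p : ℕ) (t : ℕ → ℚ) : ℚ :=
  ∑ r ∈ Finset.range (p + 1), (Nat.choose lam r : ℚ) * bellNorm p r t



def ballotSet (a b j : ℕ) : Set (List Step) :=
  {w | w.count Step.u = a ∧ w.count Step.d = b ∧ w.count Step.h = j ∧ IsNonneg w}

lemma isNonneg_append (w : List Step) (x : Step) :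
    IsNonneg (w ++ [x]) ↔
      IsNonneg w ∧ (w ++ [x]).count Step.d ≤ (w ++ [x]).count Step.u := by
  unfold IsNonneg
  constructor
  · intro H
    refine ⟨fun i => ?_, ?_⟩
    · rcases le_total i w.length with hi | hi
      · have := H i
        rwa [List.take_append_of_le_length hi] at this
      · have := H w.length
        rw [List.take_append_of_le_length le_rfl] at this
        rw [List.take_of_length_le hi]
        simpa using this
    · have := H (w ++ [x]).length
      rwa [List.take_length] at this
  · rintro ⟨H, H2⟩ i
    rcases Nat.lt_or_ge w.length i with hi | hi
    · rw [List.take_of_length_le (by simp; omega)]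
      exact H2
    · rw [List.take_append_of_le_length hi]
      exact H i

lemma isNonneg_le {w : List Step} (H : IsNonneg w) : w.count Step.d ≤ w.count Step.u := by
  have := H w.length
  rwa [List.take_length] at this

lemma ballotSet_empty {a b j : ℕ} (h : a < b) : ballotSet a b j = ∅ := by
  ext w
  simp only [ballotSet, Set.mem_ofPred_eq, Set.mem_empty_iff_false, iff_false]
  rintro ⟨h1, h2, h3, h4⟩
  have := isNonneg_le h4
  omega

def snocSet (x : Step) (S : Set (List Step)) : Set (List Step) := (fun w => w ++ [x]) '' S

lemma mem_snocSet {x y : Step} {S : Set (List Step)} {w : List Step} :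
    w ++ [y] ∈ snocSet x S ↔ x = y ∧ w ∈ S := by
  unfold snocSet
  constructor
  · rintro ⟨v, hv, e⟩
    have := List.append_inj' e rfl
    simp at this
    exact ⟨this.2, this.1 ▸ hv⟩
  · rintro ⟨rfl, h⟩
    exact ⟨w, h, rfl⟩

lemma ncard_snocSet (x : Step) (S : Set (List Step)) : (snocSet x S).ncard = S.ncard :=
  Set.ncard_image_of_injective _ (List.append_left_injective [x])

def predU : ℕ → ℕ → ℕ → Set (List Step)
  | 0, _, _ => ∅
  | a + 1, b, j => ballotSet a b j

def predD : ℕ → ℕ → ℕ → Set (List Step)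
  | _, 0, _ => ∅
  | a, b + 1, j => ballotSet a b j

def predH : ℕ → ℕ → ℕ → Set (List Step)
  | _, _, 0 => ∅
  | a, b, j + 1 => ballotSet a b j

lemma ballotSet_rec {a b j : ℕ} (hb : b ≤ a) (hn : 0 < a + b + j) :
    ballotSet a b j = snocSet Step.u (predU a b j) ∪
      (snocSet Step.d (predD a b j) ∪ snocSet Step.h (predH a b j)) := by
  ext w
  induction w using List.reverseRecOn with
  | nil =>
    simp [ballotSet, snocSet]
    omega
  | append_singleton w x _ =>
    simp only [Set.mem_union, mem_snocSet]
    simp only [ballotSet, Set.mem_ofPred_eq, isNonneg_append]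
    cases x
    · cases a <;> simp [predU, ballotSet, List.count_append]
      grind
    · cases b <;> simp [predD, ballotSet, List.count_append]
      grind
    · cases j <;> simp [predH, ballotSet, List.count_append]
      grind

lemma ballot_count (n : ℕ) : ∀ a b j : ℕ, a + b + j = n →
    (ballotSet a b j).Finite ∧ (b ≤ a + 1 →
      ((ballotSet a b j).ncard : ℚ) * ((a + 1).factorial * b.factorial * j.factorial) =
        n.factorial * (a + 1 - b)) := by
  induction n with
  | zero =>
    intro a b j h
    obtain ⟨rfl, rfl, rfl⟩ : a = 0 ∧ b = 0 ∧ j = 0 := by omega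
    have : ballotSet 0 0 0 = {[]} := by
      ext w
      simp only [ballotSet, Set.mem_ofPred_eq, Set.mem_singleton_iff]
      constructor
      · rintro ⟨h1, h2, h3, -⟩
        cases w with
        | nil => rfl
        | cons x w => cases x <;> simp at h1 h2 h3
      · rintro rfl
        simp [IsNonneg]
    rw [this]
    simp
  | succ n ih =>
    intro a b j h
    rcases Nat.lt_or_ge a b with hab | hab
    · rw [ballotSet_empty hab]
      refine ⟨Set.finite_empty, fun hb => ?_⟩
      obtain rfl : b = a + 1 := by omega
      simp
    have hU : (predU a b j).Finite ∧ ((predU a b j).ncard : ℚ) *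
        ((a + 1).factorial * b.factorial * j.factorial) =
          n.factorial * ((a - b) * (a + 1)) := by
      cases a with
      | zero =>
        obtain rfl : b = 0 := by omega
        simp [predU]
      | succ a =>
        obtain ⟨h1, h2⟩ := ih a b j (by omega)
        refine ⟨h1, ?_⟩
        have h2 := h2 hab
        rw [Nat.factorial_succ (a + 1)]
        push_cast [predU]
        linear_combination ((a : ℚ) + 1 + 1) * h2
    have hD : (predD a b j).Finite ∧ ((predD a b j).ncard : ℚ) *
        ((a + 1).factorial * b.factorial * j.factorial) =
          n.factorial * ((a + 2 - b) * b) := by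
      cases b with
      | zero => simp [predD]
      | succ b =>
        obtain ⟨h1, h2⟩ := ih a b j (by omega)
        refine ⟨h1, ?_⟩
        have h2 := h2 (by omega)
        rw [Nat.factorial_succ b]
        push_cast [predD]
        linear_combination ((b : ℚ) + 1) * h2
    have hH : (predH a b j).Finite ∧ ((predH a b j).ncard : ℚ) *
        ((a + 1).factorial * b.factorial * j.factorial) =
          n.factorial * ((a + 1 - b) * j) := by
      cases j with
      | zero => simp [predH]
      | succ j =>
        obtain ⟨h1, h2⟩ := ih a b j (by omega)
        refine ⟨h1, ?_⟩
        have h2 := h2 (by omega)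
        rw [Nat.factorial_succ j]
        push_cast [predH]
        linear_combination ((j : ℚ) + 1) * h2
    obtain ⟨fU, eU⟩ := hU
    obtain ⟨fD, eD⟩ := hD
    obtain ⟨fH, eH⟩ := hH
    have gU : (snocSet Step.u (predU a b j)).Finite := fU.image _
    have gD : (snocSet Step.d (predD a b j)).Finite := fD.image _
    have gH : (snocSet Step.h (predH a b j)).Finite := fH.image _
    have hdisj : ∀ (x y : Step) (S T : Set (List Step)), x ≠ y →
        Disjoint (snocSet x S) (snocSet y T) := by
      intro x y S T hxy
      rw [Set.disjoint_left]
      rintro _ ⟨v, hv, rfl⟩ h2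
      exact hxy (mem_snocSet.1 h2).1.symm
    rw [ballotSet_rec hab (by omega)]
    refine ⟨gU.union (gD.union gH), fun _ => ?_⟩
    rw [Set.ncard_union_eq _ gU (gD.union gH),
      Set.ncard_union_eq (hdisj _ _ _ _ (by decide)) gD gH]
    · simp only [ncard_snocSet]
      have hn : (n : ℚ) + 1 = a + b + j := by exact_mod_cast h.symm
      rw [Nat.factorial_succ n]
      push_cast
      rw [hn]
      linear_combination eU + eD + eH
    · exact Set.disjoint_union_right.2 ⟨hdisj _ _ _ _ (by decide), hdisj _ _ _ _ (by decide)⟩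

theorem stmt4 (k m j : ℕ) :
    (Set.ncard (pathSet m j) : ℚ) =
      (1 : ℚ) / (m + 1) * Nat.choose (m + j) m * Nat.choose (2 * m + j) m := by
  have h := (ballot_count _ m m j rfl).2 (by omega)
  change (Set.ncard (ballotSet m m j) : ℚ) = _
  have e1 : 2 * m + j = m + (m + j) := by ring
  rw [e1, Nat.cast_add_choose, Nat.cast_add_choose]
  rw [Nat.factorial_succ, add_assoc m m j] at h
  push_cast at h
  have p1 : (m.factorial : ℚ) ≠ 0 := by positivity
  have p2 : (j.factorial : ℚ) ≠ 0 := by positivity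
  have p3 : ((m + j).factorial : ℚ) ≠ 0 := by positivity
  have p4 : (m : ℚ) + 1 ≠ 0 := by positivity
  field_simp
  linear_combination h
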